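/- (Sawtooth Lemma, large-gap case.) For every t ∈ ℕ and all x, y ≥ 0 with |x − y| ≥ 2^{t−1}, (1/4)·∫₀⁴ ∫₀¹ |g_t(β·x + α·2^{t+1}) − g_t(β·y + α·2^{t+1})| dα dβ ≥ 2^{t+1}/12. -/

import Mathlib

open MeasureTheory

/-- The sawtooth function `g_t(x) = 2^t - |x - (⌊x/2^{t+1}⌋·2^{t+1} + 2^t)|`. -/
noncomputable def sawtooth (t : ℕ) (x : ℝ) : ℝ :=
  2 ^ t - |x - ((⌊x / 2 ^ (t + 1)⌋ : ℝ) * 2 ^ (t + 1) + 2 ^ t)|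


/-- distance to the nearest integer -/
noncomputable def hT (u : ℝ) : ℝ := ‖(u : UnitAddCircle)‖

lemma hT_round (u : ℝ) : hT u = |u - round u| := UnitAddCircle.norm_eq

lemma hT_cont : Continuous hT := by
  unfold hT
  exact continuous_norm.comp (AddCircle.continuous_mk' 1)

lemma hT_per : Function.Periodic hT 1 := by
  intro u
  unfold hT
  rw [AddCircle.coe_add_period]

lemma hT_neg (u : ℝ) : hT (-u) = hT u := by
  unfold hT
  rw [AddCircle.coe_neg, norm_neg]

lemma hT_nonneg (u : ℝ) : 0 ≤ hT u := norm_nonneg _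

lemma hT_le (u : ℝ) : hT u ≤ 1 / 2 := by
  rw [hT_round]; exact abs_sub_round u

lemma hT_small (u : ℝ) (hu : |u| ≤ 1 / 2) : hT u = |u| := by
  unfold hT
  exact (AddCircle.norm_coe_eq_abs_iff (1:ℝ) one_ne_zero).2 (by rw [abs_one]; exact hu)

lemma hT_fract (u : ℝ) : hT u = min (Int.fract u) (1 - Int.fract u) := by
  rw [hT_round, abs_sub_round_eq_min]

lemma hT_left (u : ℝ) (h0 : 0 ≤ u) (h1 : u ≤ 1 / 2) : hT u = u := by
  rw [hT_small u (by rw [abs_of_nonneg h0]; exact h1), abs_of_nonneg h0]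

lemma hT_right (u : ℝ) (h0 : 1 / 2 ≤ u) (h1 : u ≤ 1) : hT u = 1 - u := by
  have := hT_per (u - 1)
  rw [sub_add_cancel] at this
  rw [this, ← hT_neg, hT_left] <;> linarith

lemma hT_abs_sub (u v : ℝ) : |hT u - hT v| = min (hT (u - v)) (hT (u + v)) := by
  apply le_antisymm
  · apply le_min
    · have := abs_norm_sub_norm_le (u : UnitAddCircle) (v : UnitAddCircle)
      simpa [hT] using this
    · have := abs_norm_sub_norm_le (u : UnitAddCircle) (-(v : UnitAddCircle))
      simpa [hT] using this
  · have hp := abs_sub_round u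
    have hq := abs_sub_round v
    have e1 : hT (u - v) = hT ((u - round u) - (v - round v)) := by
      have := hT_per.sub_zsmul_eq (x := u - v) (round u - round v)
      rw [← this]; congr 1; simp; ring
    have e2 : hT (u + v) = hT ((u - round u) + (v - round v)) := by
      have := hT_per.sub_zsmul_eq (x := u + v) (round u + round v)
      rw [← this]; congr 1; simp; ring
    rw [e1, e2, hT_round u, hT_round v]
    generalize u - round u = p at *
    generalize v - round v = q at *
    by_cases h : 0 ≤ p * q
    · refine (min_le_left _ _).trans (le_of_eq ?_)
      have : |p - q| = |(|p| - |q|)| := by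
        rcases mul_nonneg_iff.1 h with ⟨a, b⟩ | ⟨a, b⟩
        · rw [abs_of_nonneg a, abs_of_nonneg b]
        · rw [abs_of_nonpos a, abs_of_nonpos b, ← abs_neg]; congr 1; ring
      rw [hT_small, this]
      rw [this, abs_le]
      constructor <;> linarith [abs_nonneg p, abs_nonneg q]
    · refine (min_le_right _ _).trans (le_of_eq ?_)
      have : |p + q| = |(|p| - |q|)| := by
        rcases mul_nonpos_iff.1 (not_le.1 h).le with ⟨a, b⟩ | ⟨a, b⟩
        · rw [abs_of_nonneg a, abs_of_nonpos b]; congr 1; ring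
        · rw [abs_of_nonpos a, abs_of_nonneg b, ← abs_neg]; congr 1; ring
      rw [hT_small, this]
      rw [this, abs_le]
      constructor <;> linarith [abs_nonneg p, abs_nonneg q]

lemma int_min (m : ℝ) (h0 : 0 ≤ m) (h1 : m ≤ 1 / 2) :
    ∫ w in (0:ℝ)..1, min m (hT w) = m - m ^ 2 := by
  have hc : Continuous fun w => min m (hT w) := continuous_const.min hT_cont
  have hi : ∀ a b : ℝ, IntervalIntegrable (fun w => min m (hT w)) volume a b :=
    fun a b => hc.intervalIntegrable a b
  rw [← intervalIntegral.integral_add_adjacent_intervals (hi 0 m) (hi m 1),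
    ← intervalIntegral.integral_add_adjacent_intervals (hi m (1 - m)) (hi (1 - m) 1)]
  have a1 : ∫ w in (0:ℝ)..m, min m (hT w) = ∫ w in (0:ℝ)..m, w := by
    apply intervalIntegral.integral_congr
    intro w hw
    rw [Set.uIcc_of_le h0] at hw
    have := hT_left w hw.1 (hw.2.trans h1)
    simp only [this]
    exact min_eq_right hw.2
  have a2 : ∫ w in m..(1 - m), min m (hT w) = ∫ w in m..(1 - m), m := by
    apply intervalIntegral.integral_congr
    intro w hw
    rw [Set.uIcc_of_le (by linarith)] at hw
    apply min_eq_left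
    rcases le_total w (1 / 2) with h | h
    · rw [hT_left w (h0.trans hw.1) h]; exact hw.1
    · rw [hT_right w h (by linarith [hw.2])]; linarith [hw.2]
  have a3 : ∫ w in (1 - m)..1, min m (hT w) = ∫ w in (1 - m)..1, (1 - w) := by
    apply intervalIntegral.integral_congr
    intro w hw
    rw [Set.uIcc_of_le (by linarith)] at hw
    have := hT_right w (by linarith [hw.1]) hw.2
    simp only [this]
    apply min_eq_right
    linarith [hw.1]
  rw [a1, a2, a3]
  rw [intervalIntegral.integral_sub (by simp) (by simp)]
  simp
  ring

lemma int_inner (a b : ℝ) :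
    ∫ α in (0:ℝ)..1, |hT (a + α) - hT (b + α)| = hT (a - b) - hT (a - b) ^ 2 := by
  have e : ∀ α : ℝ, |hT (a + α) - hT (b + α)| = min (hT (a - b)) (hT (2 * α + (a + b))) := by
    intro α
    rw [hT_abs_sub]
    congr 2 <;> ring
  simp only [e]
  rw [intervalIntegral.integral_comp_mul_add (fun w => min (hT (a - b)) (hT w)) two_ne_zero]
  have hper : Function.Periodic (fun w => min (hT (a - b)) (hT w)) 1 := by
    intro w; simp only [hT_per w]
  have h2 := hper.intervalIntegral_add_zsmul_eq 2 (a + b)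
    (fun s t => (continuous_const.min hT_cont).intervalIntegrable s t)
  have h3 := hper.intervalIntegral_add_eq (a + b) 0
  rw [zero_add, int_min _ (hT_nonneg _) (hT_le _)] at h3
  rw [h3] at h2
  have e2 : ∀ z : ℝ, 2 * 1 + z = z + (2 : ℤ) • (1 : ℝ) := by intro z; simp; ring
  rw [e2, mul_zero, zero_add, h2]
  simp

lemma saw_eq (t : ℕ) (x : ℝ) : sawtooth t x = 2 ^ (t + 1) * hT (x / 2 ^ (t + 1)) := by
  have hP : (0:ℝ) < 2 ^ (t + 1) := by positivity
  rw [hT_fract]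
  unfold sawtooth
  have e : x = 2 ^ (t + 1) * (x / 2 ^ (t + 1)) := by field_simp
  have e2 : (2:ℝ) ^ t = 2 ^ (t + 1) / 2 := by rw [pow_succ]; ring
  rw [e2]
  generalize (2:ℝ) ^ (t + 1) = P at *
  have e3 : x - (⌊x / P⌋ * P + P / 2) = P * (Int.fract (x / P) - 1 / 2) := by
    rw [Int.fract]
    nth_rewrite 1 [e]
    ring
  rw [e3, abs_mul, abs_of_pos hP]
  rcases le_total (Int.fract (x / P)) (1 / 2) with h | h
  · rw [abs_of_nonpos (by linarith), min_eq_left (by linarith)]; ring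
  · rw [abs_of_nonneg (by linarith), min_eq_right (by linarith)]; ring

lemma int_G : ∫ w in (0:ℝ)..1, (hT w - hT w ^ 2) = 1 / 6 := by
  have : ∫ w in (0:ℝ)..1, (hT w - hT w ^ 2) = ∫ w in (0:ℝ)..1, (w - w ^ 2) := by
    apply intervalIntegral.integral_congr
    intro w hw
    rw [Set.uIcc_of_le zero_le_one] at hw
    simp only
    rcases le_total w (1 / 2) with h | h
    · rw [hT_left w hw.1 h]
    · rw [hT_right w h hw.2]; ring
  rw [this, intervalIntegral.integral_sub (by simp) (by simp)]
  simp
  norm_num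

lemma outer (D : ℝ) (hD : 1 / 4 ≤ D) :
    1 / 3 ≤ ∫ β in (0:ℝ)..4, (hT (β * D) - hT (β * D) ^ 2) := by
  have hD0 : 0 < D := by linarith
  rw [intervalIntegral.integral_comp_mul_right (fun w => hT w - hT w ^ 2) hD0.ne']
  have hc : Continuous fun w => hT w - hT w ^ 2 := hT_cont.sub (hT_cont.pow 2)
  have hper : Function.Periodic (fun w => hT w - hT w ^ 2) 1 := by
    intro w; simp only [hT_per w]
  have h2 := hper.intervalIntegral_add_zsmul_eq ⌊4 * D⌋ 0
    (fun s t => hc.intervalIntegrable s t)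
  rw [zero_add, zero_add, int_G] at h2
  simp only [zsmul_eq_mul, mul_one] at h2
  have hn1 : (1:ℝ) ≤ ⌊4 * D⌋ := by
    have : (1:ℤ) ≤ ⌊4 * D⌋ := Int.le_floor.2 (by push_cast; linarith)
    exact_mod_cast this
  have h3 := intervalIntegral.integral_add_adjacent_intervals (μ := volume)
    (hc.intervalIntegrable 0 (⌊4 * D⌋ : ℝ)) (hc.intervalIntegrable (⌊4 * D⌋ : ℝ) (4 * D))
  have h4 : 0 ≤ ∫ w in (⌊4 * D⌋ : ℝ)..(4 * D), (hT w - hT w ^ 2) := by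
    apply intervalIntegral.integral_nonneg (Int.floor_le _)
    intro w _
    nlinarith [hT_nonneg w, hT_le w]
  have h5 := Int.lt_floor_add_one (4 * D)
  rw [zero_mul, smul_eq_mul, ← div_eq_inv_mul, le_div_iff₀ hD0]
  linarith

/-- Sawtooth Lemma, large-gap case: if `|x - y| ≥ 2^{t-1}` then
`E_{α,β}[|g_{t,α,β}(x) - g_{t,α,β}(y)|] ≥ 2^{t+1}/12`. -/
theorem sawtooth_expected_gap_large (t : ℕ) (x y : ℝ) (hx : 0 ≤ x) (hy : 0 ≤ y)
    (hxy : 2 ^ t / 2 ≤ |x - y|) :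
    2 ^ (t + 1) / 12 ≤
      (1 / 4) * ∫ β in (0:ℝ)..4, ∫ α in (0:ℝ)..1,
        |sawtooth t (β * x + α * 2 ^ (t + 1)) - sawtooth t (β * y + α * 2 ^ (t + 1))| := by
  have hP : (0:ℝ) < 2 ^ (t + 1) := by positivity
  have e2 : (2:ℝ) ^ t = 2 ^ (t + 1) / 2 := by rw [pow_succ]; ring
  rw [e2] at hxy
  have key : ∀ β : ℝ, (∫ α in (0:ℝ)..1,
      |sawtooth t (β * x + α * 2 ^ (t + 1)) - sawtooth t (β * y + α * 2 ^ (t + 1))|)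
      = 2 ^ (t + 1) * (hT (β * (|x - y| / 2 ^ (t + 1)))
        - hT (β * (|x - y| / 2 ^ (t + 1))) ^ 2) := by
    intro β
    simp only [saw_eq]
    generalize (2:ℝ) ^ (t + 1) = P at *
    have e : ∀ α : ℝ, |P * hT ((β * x + α * P) / P) - P * hT ((β * y + α * P) / P)|
        = P * |hT (β * x / P + α) - hT (β * y / P + α)| := by
      intro α
      rw [← mul_sub, abs_mul, abs_of_pos hP]
      congr 5 <;> field_simp
    simp only [e]
    rw [intervalIntegral.integral_const_mul, int_inner]
    have e5 : hT (β * x / P - β * y / P) = hT (β * (|x - y| / P)) := by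
      rcases abs_cases (x - y) with ⟨h, _⟩ | ⟨h, _⟩
      · rw [h]; congr 1; ring
      · rw [h, ← hT_neg]; congr 1; ring
    rw [e5]
  simp only [key]
  rw [intervalIntegral.integral_const_mul]
  have := outer (|x - y| / 2 ^ (t + 1)) (by rw [le_div_iff₀ hP]; linarith)
  nlinarith [mul_le_mul_of_nonneg_left this hP.le]
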